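/- Let J = J(a,b) and J₀ = J(a⁰,b⁰) be two-sided p-periodic Jacobi operators on ℓ²(ℤ). Then their spectra (as bounded operators on the complex Hilbert space ℓ²(ℤ)) coincide, σ(J) = σ(J₀), if and only if their discriminants coincide, Δ_{(a,b)} = Δ_{(a⁰,b⁰)} as polynomials. -/

import Mathlib

open scoped ComplexConjugate

noncomputable section

/-- The two-sided Hilbert space `ℓ²(ℤ)`. -/
abbrev HZ : Type := lp (fun _ : ℤ => ℂ) 2

/-- The transfer matrix `Λ_n(x) = (1/a_n)·[[x − b_n, −1], [a_n², 0]]`. -/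
def lamMat (a b : ℤ → ℝ) (n : ℤ) : Matrix (Fin 2) (Fin 2) (Polynomial ℝ) :=
  Polynomial.C (a n)⁻¹ • !![Polynomial.X - Polynomial.C (b n), -1;
    Polynomial.C ((a n) ^ 2), 0]

/-- The ordered product `Λ_n ⋯ Λ_2 Λ_1`. -/
def tMat (a b : ℤ → ℝ) : ℕ → Matrix (Fin 2) (Fin 2) (Polynomial ℝ)
  | 0 => 1
  | n + 1 => lamMat a b ((n : ℤ) + 1) * tMat a b n

/-- The discriminant `Δ_{(a,b)}(x) = Tr(Λ_p(x) ⋯ Λ_1(x))`. -/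
def disc (a b : ℤ → ℝ) (p : ℕ) : Polynomial ℝ := Matrix.trace (tMat a b p)
section polys
open Polynomial

lemma sq_of_nonneg (n : ℕ) : ∀ F : ℝ[X], F.natDegree ≤ n → F ≠ 0 → (∀ x : ℝ, 0 ≤ F.eval x) →
    (∀ z : ℂ, aeval z F = 0 → ∃ r : ℝ, z = r) → ∃ W : ℝ[X], F = W ^ 2 := by
  induction n using Nat.strong_induction_on with
  | _ n ih =>
  intro F hF h0 hnn hre
  by_cases hd : F.natDegree = 0
  · rw [natDegree_eq_zero] at hd
    obtain ⟨c, rfl⟩ := hd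
    refine ⟨C (Real.sqrt c), ?_⟩
    have := hnn 0
    rw [eval_C] at this
    rw [← C_pow, Real.sq_sqrt this]
  · have hdeg : F.degree ≠ 0 := fun h => hd (natDegree_eq_of_degree_eq_some h)
    obtain ⟨z, hz⟩ := IsAlgClosed.exists_aeval_eq_zero ℂ F hdeg
    obtain ⟨r, rfl⟩ := hre z hz
    have hr : F.IsRoot r := by
      have : aeval ((r : ℝ) : ℂ) F = ((F.eval r : ℝ) : ℂ) := by
        have := aeval_algebraMap_apply ℂ r F
        simpa using this
      rw [this] at hz
      exact_mod_cast hz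
    have hmin : IsLocalMin (fun x => F.eval x) r := by
      refine Filter.Eventually.of_forall fun x => ?_
      show F.eval r ≤ F.eval x
      rw [hr]; exact hnn x
    have hder := hmin.deriv_eq_zero
    rw [Polynomial.deriv] at hder
    have hm := (one_lt_rootMultiplicity_iff_isRoot h0).2 ⟨hr, hder⟩
    have hdvd : (X - C r) ^ 2 ∣ F := (le_rootMultiplicity_iff h0).1 hm
    obtain ⟨G, hG⟩ := hdvd
    have hG0 : G ≠ 0 := by rintro rfl; simp at hG; exact h0 hG
    have hX0 : (X - C r) ^ 2 ≠ 0 := pow_ne_zero _ (X_sub_C_ne_zero r)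
    have hnd : F.natDegree = 2 + G.natDegree := by
      rw [hG, natDegree_mul hX0 hG0, natDegree_pow, natDegree_X_sub_C]
    have hGnn : ∀ x : ℝ, 0 ≤ G.eval x := by
      have hcl : IsClosed {x : ℝ | 0 ≤ G.eval x} :=
        isClosed_le continuous_const G.continuous
      have hsub : ({r}ᶜ : Set ℝ) ⊆ {x : ℝ | 0 ≤ G.eval x} := by
        intro x hx
        have h1 := hnn x
        rw [hG, eval_mul] at h1
        have h2 : 0 < eval x ((X - C r) ^ 2) := by
          have : x - r ≠ 0 := sub_ne_zero.2 hx
          simp; positivity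
        exact nonneg_of_mul_nonneg_right h1 h2
      have := closure_minimal hsub hcl
      rw [(dense_compl_singleton r).closure_eq] at this
      exact fun x => this (Set.mem_univ x)
    obtain ⟨W, hW⟩ := ih G.natDegree (by omega) G le_rfl hG0 hGnn (fun z hz => hre z (by
      rw [hG, map_mul, hz, mul_zero]))
    exact ⟨(X - C r) * W, by rw [mul_pow, ← hW, hG]⟩

lemma poly_unique (p : ℕ) (hp : 1 ≤ p) (P Q : ℝ[X]) (hPd : P.natDegree = p) (hQd : Q.natDegree = p)
    (hPl : 0 < P.leadingCoeff) (hQl : 0 < Q.leadingCoeff)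
    (h : ∀ z : ℂ, (∃ t : ℝ, |t| ≤ 2 ∧ aeval z P = t) ↔ (∃ t : ℝ, |t| ≤ 2 ∧ aeval z Q = t))
    (hre : ∀ z : ℂ, (∃ t : ℝ, |t| ≤ 2 ∧ aeval z P = t) → ∃ r : ℝ, z = r) : P = Q := by
  have hev : ∀ (R : ℝ[X]) (r : ℝ), aeval (r : ℂ) R = ((R.eval r : ℝ) : ℂ) := by
    intro R r
    have := aeval_algebraMap_apply ℂ r R
    simpa using this
  have hP0 : P ≠ 0 := by rintro rfl; simp at hPl
  have hQ0 : Q ≠ 0 := by rintro rfl; simp at hQl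
  have hreal : ∀ x : ℝ, |P.eval x| ≤ 2 ↔ |Q.eval x| ≤ 2 := by
    intro x
    have := h x
    simp only [hev, Complex.ofReal_inj] at this
    simpa using this
  have hA : ∀ R : ℝ[X], R.natDegree = p → 0 < R.leadingCoeff →
      (R ^ 2 - C 4).natDegree = 2 * p ∧ 0 < (R ^ 2 - C 4).leadingCoeff := by
    intro R hd hl
    have h1 : (R ^ 2).natDegree = 2 * p := by rw [natDegree_pow, hd]
    refine ⟨by rw [natDegree_sub_C, h1], ?_⟩
    rw [leadingCoeff_sub_of_degree_lt, leadingCoeff_pow]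
    · positivity
    · refine lt_of_le_of_lt degree_C_le ?_
      apply natDegree_pos_iff_degree_pos.1; omega
  obtain ⟨hPA, hPA'⟩ := hA P hPd hPl
  obtain ⟨hQA, hQA'⟩ := hA Q hQd hQl
  have hPn : P ^ 2 - C 4 ≠ 0 := by intro h; rw [h] at hPA'; simp at hPA'
  have hQn : Q ^ 2 - C 4 ≠ 0 := by intro h; rw [h] at hQA'; simp at hQA'
  have hroot : ∀ (R : ℝ[X]) (z : ℂ), aeval z (R ^ 2 - C 4) = 0 →
      ∃ t : ℝ, |t| ≤ 2 ∧ aeval z R = t := by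
    intro R z hz
    have h1 : (aeval z R - 2) * (aeval z R + 2) = 0 := by
      rw [map_sub, map_pow, aeval_C] at hz
      have : (algebraMap ℝ ℂ) 4 = 4 := by simp
      rw [this] at hz
      linear_combination hz
    rcases mul_eq_zero.1 h1 with h2 | h2
    · exact ⟨2, by norm_num, by push_cast; linear_combination h2⟩
    · exact ⟨-2, by norm_num, by push_cast; linear_combination h2⟩
  obtain ⟨W, hW⟩ : ∃ W : ℝ[X], (P ^ 2 - C 4) * (Q ^ 2 - C 4) = W ^ 2 := by
    refine sq_of_nonneg _ _ le_rfl (mul_ne_zero hPn hQn) ?_ ?_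
    · intro x
      simp only [eval_mul, eval_sub, eval_pow, eval_C]
      have hk : ∀ t : ℝ, |t| ≤ 2 ↔ t ^ 2 - 4 ≤ 0 := by
        intro t
        rw [show (2 : ℝ) = |2| by norm_num, ← sq_le_sq]
        constructor <;> intro <;> linarith
      have h3 := hreal x
      rw [hk, hk] at h3
      by_cases h4 : eval x P ^ 2 - 4 ≤ 0
      · exact mul_nonneg_of_nonpos_of_nonpos h4 (h3.1 h4)
      · have h5 := mt h3.2 h4
        push Not at h4 h5
        positivity
    · intro z hz
      rw [map_mul] at hz
      rcases mul_eq_zero.1 hz with h2 | h2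
      · exact hre z (hroot _ _ h2)
      · exact hre z ((h z).2 (hroot _ _ h2))
  obtain ⟨W, hW, hWl⟩ : ∃ W : ℝ[X], (P ^ 2 - C 4) * (Q ^ 2 - C 4) = W ^ 2 ∧ 0 < W.leadingCoeff := by
    have hW0 : W ≠ 0 := by
      rintro rfl
      exact mul_ne_zero hPn hQn (by rw [hW]; simp)
    rcases lt_or_gt_of_ne (leadingCoeff_ne_zero.2 hW0) with h1 | h1
    · exact ⟨-W, by rw [hW]; ring, by rw [leadingCoeff_neg]; linarith⟩
    · exact ⟨W, hW, h1⟩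
  have hWd : W.natDegree = 2 * p := by
    have := congrArg natDegree hW
    rw [natDegree_mul hPn hQn, natDegree_pow, hPA, hQA] at this
    omega
  have hPQd : (P * Q).natDegree = 2 * p := by
    rw [natDegree_mul hP0 hQ0, hPd, hQd]; ring
  have hS : 0 < (P * Q + W).coeff (2 * p) := by
    have h1 : (P * Q).coeff (2 * p) = P.leadingCoeff * Q.leadingCoeff := by
      rw [← leadingCoeff_mul, leadingCoeff, hPQd]
    have h2 : W.coeff (2 * p) = W.leadingCoeff := by rw [leadingCoeff, hWd]
    rw [coeff_add, h1, h2]; positivity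
  have hSd : 2 * p ≤ (P * Q + W).natDegree := le_natDegree_of_ne_zero hS.ne'
  have hS0 : P * Q + W ≠ 0 := by intro h; rw [h] at hS; simp at hS
  have hprod : (P * Q - W) * (P * Q + W) = C 4 * (P ^ 2 - C 4) + C 4 * Q ^ 2 := by
    have h16 : (C 4 * C 4 : ℝ[X]) = C 16 := by rw [← C_mul]; norm_num
    linear_combination hW
  have hRd : (C 4 * (P ^ 2 - C 4) + C 4 * Q ^ 2).natDegree ≤ 2 * p := by
    refine (natDegree_add_le _ _).trans (max_le ?_ ?_)
    · exact (natDegree_C_mul_le _ _).trans hPA.le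
    · exact (natDegree_C_mul_le _ _).trans (by rw [natDegree_pow, hQd])
  obtain ⟨c, hc⟩ : ∃ c : ℝ, C c = P * Q - W := by
    rw [← natDegree_eq_zero]
    by_cases h0 : P * Q - W = 0
    · rw [h0]; simp
    · rw [← hprod, natDegree_mul h0 hS0] at hRd
      omega
  have hid : C 4 * P ^ 2 + C 4 * Q ^ 2 = C (2 * c) * (P * Q) + C (16 - c ^ 2) := by
    have hW2 : W = P * Q - C c := by rw [hc]; ring
    rw [hW2] at hW
    simp only [C_mul, C_sub, C_pow]
    have h16 : (C 16 : ℝ[X]) = C 4 * C 4 := by rw [← C_mul]; norm_num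
    have h2 : (C 2 : ℝ[X]) = 2 := by rfl
    rw [h16, h2]
    linear_combination -hW
  have hcoef := congrArg (fun R => coeff R (2 * p)) hid
  have hP2 : (P ^ 2).coeff (2 * p) = P.leadingCoeff ^ 2 := by
    rw [← leadingCoeff_pow, leadingCoeff, natDegree_pow, hPd]
  have hQ2 : (Q ^ 2).coeff (2 * p) = Q.leadingCoeff ^ 2 := by
    rw [← leadingCoeff_pow, leadingCoeff, natDegree_pow, hQd]
  have hPQ : (P * Q).coeff (2 * p) = P.leadingCoeff * Q.leadingCoeff := by
    rw [← leadingCoeff_mul, leadingCoeff, hPQd]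
  simp only [coeff_add, coeff_C_mul, hP2, hQ2, hPQ, coeff_C] at hcoef
  rw [if_neg (by omega)] at hcoef
  have hc4 : 4 ≤ c := by
    have hpos : 0 < P.leadingCoeff * Q.leadingCoeff := by positivity
    by_contra hlt
    push Not at hlt
    nlinarith [sq_nonneg (P.leadingCoeff - Q.leadingCoeff), mul_pos hpos (sub_pos.2 hlt)]
  obtain ⟨z, hz⟩ := IsAlgClosed.exists_aeval_eq_zero ℂ P
    (fun h => by have := natDegree_eq_of_degree_eq_some (n := 0) h; omega)
  obtain ⟨r, rfl⟩ := hre z ⟨0, by norm_num, by rw [hz]; simp⟩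
  rw [hev] at hz
  have hz' : P.eval r = 0 := by exact_mod_cast hz
  have hevr := congrArg (eval r) hid
  simp only [eval_add, eval_mul, eval_C, eval_pow, hz'] at hevr
  have hc' : c = 4 := by nlinarith [sq_nonneg (eval r Q)]
  subst hc'
  have : C 4 * (P - Q) ^ 2 = 0 := by
    have h8 : (C (2 * 4) : ℝ[X]) = 2 * C 4 := by rw [C_mul]; rfl
    have h9 : (C (16 - 4 ^ 2) : ℝ[X]) = 0 := by norm_num
    rw [h8, h9] at hid
    linear_combination hid
  have h4 : (C 4 : ℝ[X]) ≠ 0 := by simp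
  have := (mul_eq_zero.1 this).resolve_left h4
  exact sub_eq_zero.1 (pow_eq_zero_iff (two_ne_zero) |>.1 this)

end polys

section transfer
open Polynomial

lemma tMat_zero' (a b : ℤ → ℝ) : tMat a b 0 = 1 := rfl

lemma tMat_succ_entries (a b : ℤ → ℝ) (n : ℕ) :
    tMat a b (n + 1) 0 0 = C (a (n + 1))⁻¹ * ((X - C (b (n + 1))) * tMat a b n 0 0 - tMat a b n 1 0) ∧
    tMat a b (n + 1) 0 1 = C (a (n + 1))⁻¹ * ((X - C (b (n + 1))) * tMat a b n 0 1 - tMat a b n 1 1) ∧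
    tMat a b (n + 1) 1 0 = C (a (n + 1))⁻¹ * (C ((a (n + 1)) ^ 2) * tMat a b n 0 0) ∧
    tMat a b (n + 1) 1 1 = C (a (n + 1))⁻¹ * (C ((a (n + 1)) ^ 2) * tMat a b n 0 1) := by
  refine ⟨?_, ?_, ?_, ?_⟩ <;>
  · simp only [tMat, lamMat, Matrix.mul_apply, Fin.sum_univ_two, Matrix.smul_apply, Matrix.of_apply,
      Matrix.cons_val', Matrix.cons_val_zero, Matrix.cons_val_one, smul_eq_mul,
      Matrix.cons_val_fin_one]
    ring

lemma tMat_det (a b : ℤ → ℝ) (hpos : ∀ n, 0 < a n) (n : ℕ) :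
    tMat a b n 0 0 * tMat a b n 1 1 - tMat a b n 0 1 * tMat a b n 1 0 = 1 := by
  induction n with
  | zero => simp [tMat]
  | succ n ih =>
    obtain ⟨h1, h2, h3, h4⟩ := tMat_succ_entries a b n
    have hi : (C (a (n + 1))⁻¹ * C (a (n + 1)) : ℝ[X]) = 1 := by
      rw [← C_mul, inv_mul_cancel₀ (hpos _).ne', C_1]
    rw [h1, h2, h3, h4, C_pow]
    linear_combination (C (a (n + 1))⁻¹ * C (a (n + 1))) ^ 2 * ih +
      (C (a (n + 1))⁻¹ * C (a (n + 1)) + 1) * hi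

lemma mem_dlt_mul {n : ℕ} {f : ℝ[X]} (c : ℝ) (hf : f ∈ degreeLT ℝ n) : C c * f ∈ degreeLT ℝ n := by
  rw [← smul_eq_C_mul]; exact Submodule.smul_mem _ _ hf

lemma mem_dlt_X {n : ℕ} {f : ℝ[X]} (c : ℝ) (hf : f ∈ degreeLT ℝ n) :
    (X - C c) * f ∈ degreeLT ℝ (n + 1) := by
  rw [mem_degreeLT] at *
  by_cases h0 : f = 0
  · subst h0; simp [bot_lt_iff_ne_bot]
  · rw [degree_mul, degree_X_sub_C]
    rw [degree_eq_natDegree h0] at *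
    norm_cast at *
    omega

lemma tMat_deg (a b : ℤ → ℝ) (hpos : ∀ n, 0 < a n) (n : ℕ) :
    0 < (tMat a b n 0 0).coeff n ∧ tMat a b n 0 0 ∈ degreeLT ℝ (n + 1) ∧
    tMat a b n 1 0 ∈ degreeLT ℝ n ∧ tMat a b n 0 1 ∈ degreeLT ℝ n ∧
    tMat a b n 1 1 ∈ degreeLT ℝ (n + 1) := by
  induction n with
  | zero => simp [tMat, mem_degreeLT]
  | succ n ih =>
    obtain ⟨h1, h2, h3, h4⟩ := tMat_succ_entries a b n
    obtain ⟨i1, i2, i3, i4, i5⟩ := ih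
    have hm : ∀ m k : ℕ, m ≤ k → degreeLT ℝ m ≤ degreeLT ℝ k := fun m k h => degreeLT_mono h
    rw [h1, h2, h3, h4]
    refine ⟨?_, ?_, ?_, ?_, ?_⟩
    · have e1 : (tMat a b n 1 0).coeff (n + 1) = 0 :=
        coeff_eq_zero_of_degree_lt ((mem_degreeLT.1 i3).trans (by norm_cast; omega))
      have e2 : (tMat a b n 0 0).coeff (n + 1) = 0 :=
        coeff_eq_zero_of_degree_lt (mem_degreeLT.1 i2)
      rw [coeff_C_mul, coeff_sub, sub_mul, coeff_sub, coeff_X_mul, coeff_C_mul, e1, e2]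
      have := hpos (n + 1)
      simp only [mul_zero, sub_zero]
      positivity
    · exact mem_dlt_mul _ (Submodule.sub_mem _ (mem_dlt_X _ i2) (hm _ _ (by omega) i3))
    · exact mem_dlt_mul _ (mem_dlt_mul _ i2)
    · exact mem_dlt_mul _ (Submodule.sub_mem _ (mem_dlt_X _ i4) i5)
    · exact mem_dlt_mul _ (mem_dlt_mul _ (hm _ _ (by omega) i4))

lemma disc_deg (a b : ℤ → ℝ) (hpos : ∀ n, 0 < a n) (p : ℕ) (hp : 1 ≤ p) :
    (disc a b p).natDegree = p ∧ 0 < (disc a b p).leadingCoeff := by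
  obtain ⟨n, rfl⟩ : ∃ n, p = n + 1 := ⟨p - 1, by omega⟩
  obtain ⟨h1, h2, h3, h4⟩ := tMat_succ_entries a b n
  obtain ⟨i1, i2, i3, i4, i5⟩ := tMat_deg a b hpos n
  obtain ⟨j1, j2, j3, j4, j5⟩ := tMat_deg a b hpos (n + 1)
  have k : tMat a b (n + 1) 1 1 ∈ degreeLT ℝ (n + 1) := by
    rw [h4]; exact mem_dlt_mul _ (mem_dlt_mul _ (degreeLT_mono (by omega) i4))
  have hd : disc a b (n + 1) = tMat a b (n + 1) 0 0 + tMat a b (n + 1) 1 1 := by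
    rw [disc, Matrix.trace_fin_two]
  have hc : 0 < (disc a b (n + 1)).coeff (n + 1) := by
    rw [hd, coeff_add, coeff_eq_zero_of_degree_lt (mem_degreeLT.1 k), add_zero]; exact j1
  have hle : (disc a b (n + 1)).natDegree ≤ n + 1 := by
    have : disc a b (n + 1) ∈ degreeLT ℝ (n + 1 + 1) := by
      rw [hd]; exact Submodule.add_mem _ j2 j5
    rw [mem_degreeLT] at this
    exact natDegree_le_of_degree_le (Order.le_of_lt_succ (by exact_mod_cast this))
  have hn := le_antisymm hle (le_natDegree_of_ne_zero hc.ne')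
  exact ⟨hn, by rw [leadingCoeff, hn]; exact hc⟩

variable {N : Type*} [AddCommGroup N] [Module ℝ[X] N]

lemma rec_zero (a b : ℤ → ℝ) (hpos : ∀ n, 0 < a n) (W : ℤ → N)
    (hW : ∀ n, (X : ℝ[X]) • W n =
      (C (a (n - 1)) : ℝ[X]) • W (n - 1) + (C (b n) : ℝ[X]) • W n + (C (a n) : ℝ[X]) • W (n + 1))
    (h0 : W 0 = 0) (h1 : W 1 = 0) (n : ℤ) : W n = 0 := by
  have hc : ∀ (n : ℤ) (v : N), (C (a n) : ℝ[X]) • v = 0 → v = 0 := by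
    intro n v hv
    have : (C (a n)⁻¹ * C (a n) : ℝ[X]) • v = 0 := by rw [mul_smul, hv, smul_zero]
    rwa [← C_mul, inv_mul_cancel₀ (hpos _).ne', C_1, one_smul] at this
  have : W n = 0 ∧ W (n + 1) = 0 := by
    induction n using Int.induction_on with
    | zero => exact ⟨h0, by simpa using h1⟩
    | succ i ih =>
      refine ⟨ih.2, ?_⟩
      have := hW (i + 1)
      rw [ih.2, add_sub_cancel_right, ih.1] at this
      simp only [smul_zero, zero_add] at this
      exact hc _ _ this.symm
    | pred i ih =>
      refine ⟨?_, by rw [sub_add_cancel]; exact ih.1⟩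
      have := hW (-i)
      rw [ih.2, ih.1] at this
      simp only [smul_zero, add_zero] at this
      exact hc _ _ this.symm
  exact this.1

lemma transfer_vec (a b : ℤ → ℝ) (hpos : ∀ n, 0 < a n) (U : ℤ → N)
    (hU : ∀ n, (X : ℝ[X]) • U n =
      (C (a (n - 1)) : ℝ[X]) • U (n - 1) + (C (b n) : ℝ[X]) • U n + (C (a n) : ℝ[X]) • U (n + 1))
    (k : ℤ) (hak : ∀ n, a (n + k) = a n) (hbk : ∀ n, b (n + k) = b n) (n : ℕ) :
    U (n + 1 + k) = tMat a b n 0 0 • U (1 + k) + tMat a b n 0 1 • (C (a 0) : ℝ[X]) • U k ∧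
    (C (a n) : ℝ[X]) • U (n + k) =
      tMat a b n 1 0 • U (1 + k) + tMat a b n 1 1 • (C (a 0) : ℝ[X]) • U k := by
  induction n with
  | zero => simp [tMat]
  | succ n ih =>
    obtain ⟨h1, h2, h3, h4⟩ := tMat_succ_entries a b n
    obtain ⟨i1, i2⟩ := ih
    have hi : (C (a (n + 1))⁻¹ * C (a (n + 1)) : ℝ[X]) = 1 := by
      rw [← C_mul, inv_mul_cancel₀ (hpos _).ne', C_1]
    have hr := hU (n + 1 + k)
    rw [show (n : ℤ) + 1 + k - 1 = n + k by ring, show (n : ℤ) + 1 + k + 1 = n + 1 + 1 + k by ring,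
      hak, hak, hbk] at hr
    have hr' : U (n + 1 + 1 + k) = (C (a (n + 1))⁻¹ : ℝ[X]) •
        ((X - C (b (n + 1)) : ℝ[X]) • U (n + 1 + k) - (C (a n) : ℝ[X]) • U (n + k)) := by
      calc U (n + 1 + 1 + k) = (C (a (n + 1))⁻¹ * C (a (n + 1)) : ℝ[X]) • U (n + 1 + 1 + k) := by
            rw [hi, one_smul]
        _ = _ := by rw [mul_smul]; congr 1; rw [sub_smul, hr]; abel
    push_cast
    rw [h1, h2, h3, h4, C_pow]
    constructor
    · rw [hr', i1, i2]; module
    · rw [i1]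
      have : (C (a (n + 1))⁻¹ * C (a (n + 1)) ^ 2 : ℝ[X]) = C (a (n + 1)) := by
        linear_combination C (a (n + 1)) * hi
      rw [← mul_assoc, ← mul_assoc, this]; module

lemma disc_smul (a b : ℤ → ℝ) (hpos : ∀ n, 0 < a n) (p : ℕ)
    (ha : Function.Periodic a (p : ℤ)) (hb : Function.Periodic b (p : ℤ)) (U : ℤ → N)
    (hU : ∀ n, (X : ℝ[X]) • U n =
      (C (a (n - 1)) : ℝ[X]) • U (n - 1) + (C (b n) : ℝ[X]) • U n + (C (a n) : ℝ[X]) • U (n + 1))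
    (n : ℤ) : disc a b p • U n = U (n + p) + U (n - p) := by
  have hd : disc a b p = tMat a b p 0 0 + tMat a b p 1 1 := by
    rw [disc, Matrix.trace_fin_two]
  have hdet := tMat_det a b hpos p
  obtain ⟨f1, f2⟩ := transfer_vec a b hpos U hU 0 (by simp) (by simp) p
  obtain ⟨g1, g2⟩ := transfer_vec a b hpos U hU (-p) (fun n => by
    have := ha (n + -p); simp only [neg_add_cancel_right] at this; exact this.symm) (fun n => by
    have := hb (n + -p); simp only [neg_add_cancel_right] at this; exact this.symm) p
  have hap : a p = a 0 := by have := ha 0; rwa [zero_add] at this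
  rw [hap] at f2 g2
  rw [show (p : ℤ) + 1 + -p = 1 by ring] at g1
  rw [show (p : ℤ) + -p = 0 by ring] at g2
  simp only [add_zero] at f1 f2
  set T := tMat a b p
  set c : ℝ[X] := C (a 0)
  have k1 : U (1 + -p) = T 1 1 • U 1 - T 0 1 • c • U 0 := by
    rw [g1, g2]
    have : U (1 + -p) = (T 0 0 * T 1 1 - T 0 1 * T 1 0) • U (1 + -p) := by rw [hdet, one_smul]
    rw [this]
    match_scalars
    · linear_combination (-1 : ℝ[X]) * (T 0 0 * T 1 1 - T 0 1 * T 1 0) * hdet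
    · ring
  have k2 : c • U (-p) = T 0 0 • c • U 0 - T 1 0 • U 1 := by
    rw [g1, g2]
    have : U (-p) = (T 0 0 * T 1 1 - T 0 1 * T 1 0) • U (-p) := by rw [hdet, one_smul]
    rw [this]
    match_scalars
    · linear_combination (-1 : ℝ[X]) * c * (T 0 0 * T 1 1 - T 0 1 * T 1 0) * hdet
    · ring
  rw [← sub_eq_zero]
  refine rec_zero a b hpos (fun n => disc a b p • U n - (U (n + p) + U (n - p))) ?_ ?_ ?_ n
  · intro n
    have e1 := hU n
    have e2 := hU (n + p)
    have e3 := hU (n - p)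
    rw [ha, hb, show n + (p : ℤ) - 1 = n - 1 + p by ring, ha,
      show n + (p : ℤ) + 1 = n + 1 + p by ring] at e2
    rw [ha.sub_eq, hb.sub_eq, show n - (p : ℤ) - 1 = n - 1 - p by ring, ha.sub_eq,
      show n - (p : ℤ) + 1 = n + 1 - p by ring] at e3
    rw [smul_sub, smul_add, e2, e3, smul_comm, e1]
    module
  · simp only [zero_add, zero_sub]
    have hi : (C (a 0)⁻¹ * c : ℝ[X]) = 1 := by
      rw [← C_mul, inv_mul_cancel₀ (hpos _).ne', C_1]
    have : c • (disc a b p • U 0 - (U p + U (-p))) = 0 := by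
      rw [smul_sub, smul_add, k2, f2, hd]; module
    rw [← one_smul ℝ[X] (disc a b p • U 0 - (U p + U (-p))), ← hi, mul_smul, this, smul_zero]
  · rw [add_comm (1 : ℤ), f1, sub_eq_add_neg (1 : ℤ), k1, hd]; module

end transfer

section operator
open Polynomial

abbrev eZ (n : ℤ) : HZ := lp.single 2 n (1 : ℂ)

lemma inner_eZ (n : ℤ) (u : HZ) : inner ℂ (eZ n) u = u n := by
  rw [lp.inner_single_left]; simp

lemma eZ_apply (n m : ℤ) : (eZ n) m = if m = n then 1 else 0 := by
  rw [lp.single_apply, Pi.single_apply]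

variable (a b : ℤ → ℝ) (J : HZ →L[ℂ] HZ)

lemma J_eZ (hJ : ∀ (u : HZ) (n : ℤ),
      (J u) n = (a (n - 1) : ℂ) * u (n - 1) + (b n : ℂ) * u n + (a n : ℂ) * u (n + 1)) (n : ℤ) :
    J (eZ n) = (a (n - 1) : ℂ) • eZ (n - 1) + (b n : ℂ) • eZ n + (a n : ℂ) • eZ (n + 1) := by
  ext m
  rw [hJ]
  simp only [lp.coeFn_add, lp.coeFn_smul, Pi.add_apply, Pi.smul_apply, smul_eq_mul, eZ_apply]
  by_cases h1 : m = n
  · rw [if_neg (show ¬ m - 1 = n by omega), if_pos h1, if_neg (show ¬ m + 1 = n by omega),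
      if_neg (show ¬ m = n - 1 by omega), if_neg (show ¬ m = n + 1 by omega), h1]
  · by_cases h2 : m = n - 1
    · rw [if_neg (show ¬ m - 1 = n by omega), if_neg h1, if_pos (show m + 1 = n by omega),
        if_pos h2, if_neg (show ¬ m = n + 1 by omega), h2]
      ring
    · by_cases h3 : m = n + 1
      · rw [if_pos (show m - 1 = n by omega), if_neg h1, if_neg (show ¬ m + 1 = n by omega),
          if_neg h2, if_pos h3, h3, add_sub_cancel_right]
        ring
      · rw [if_neg (by omega), if_neg (by omega), if_neg (by omega), if_neg (by omega),
          if_neg (by omega)]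
        simp

lemma J_selfAdjoint (hJ : ∀ (u : HZ) (n : ℤ),
      (J u) n = (a (n - 1) : ℂ) * u (n - 1) + (b n : ℂ) * u n + (a n : ℂ) * u (n + 1)) :
    IsSelfAdjoint J := by
  rw [ContinuousLinearMap.isSelfAdjoint_iff']
  ext u n
  rw [← inner_eZ, ContinuousLinearMap.adjoint_inner_right, J_eZ a b J hJ, hJ]
  simp only [inner_add_left, inner_smul_left, inner_eZ, Complex.conj_ofReal]

/-- Translation on `ℓ²(ℤ)`, with its norm. -/
lemma exists_shift (k : ℤ) (u : HZ) : ∃ v : HZ, (∀ n, v n = u (n + k)) ∧ ‖v‖ = ‖u‖ := by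
  have hs : Summable fun n : ℤ => ‖u n‖ ^ (2 : ENNReal).toReal :=
    (lp.memℓp u).summable (by norm_num)
  have hs' : Summable fun n : ℤ => ‖u (n + k)‖ ^ (2 : ENNReal).toReal :=
    (Equiv.addRight k).summable_iff.2 hs
  refine ⟨⟨fun n => u (n + k), memℓp_gen hs'⟩, fun n => rfl, ?_⟩
  rw [lp.norm_eq_tsum_rpow (by norm_num), lp.norm_eq_tsum_rpow (by norm_num)]
  congr 1
  exact (Equiv.addRight k).tsum_eq (fun n : ℤ => ‖u n‖ ^ (2 : ENNReal).toReal)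

/-- The evaluation of real polynomials at an operator. -/
def evJ : ℝ[X] →+* (HZ →L[ℂ] HZ) :=
  (aeval (R := ℂ) J).toRingHom.comp (mapRingHom (algebraMap ℝ ℂ))

lemma evJ_X : evJ J X = J := by simp [evJ]
lemma evJ_C (r : ℝ) (u : HZ) : evJ J (C r) u = (r : ℂ) • u := by
  simp [evJ, Algebra.algebraMap_eq_smul_one]
  rfl
lemma evJ_eq (P : ℝ[X]) : evJ J P = aeval J (P.map (algebraMap ℝ ℂ)) := rfl

lemma evJ_selfAdjoint (h : IsSelfAdjoint J) (P : ℝ[X]) : IsSelfAdjoint (evJ J P) := by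
  induction P using Polynomial.induction_on' with
  | add p q hp hq => rw [map_add]; exact hp.add hq
  | monomial n c =>
    rw [← C_mul_X_pow_eq_monomial, map_mul, map_pow, evJ_X]
    have : evJ J (C c) = (c : ℂ) • 1 := by ext1 u; rw [evJ_C]; rfl
    rw [this, smul_mul_assoc, one_mul]
    refine IsSelfAdjoint.smul ?_ (h.pow n)
    rw [isSelfAdjoint_iff]; simp

lemma disc_J (hpos : ∀ n, 0 < a n) (p : ℕ)
    (ha : Function.Periodic a (p : ℤ)) (hb : Function.Periodic b (p : ℤ))
    (hJ : ∀ (u : HZ) (n : ℤ),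
      (J u) n = (a (n - 1) : ℂ) * u (n - 1) + (b n : ℂ) * u n + (a n : ℂ) * u (n + 1)) (n : ℤ) :
    evJ J (disc a b p) (eZ n) = eZ (n + p) + eZ (n - p) := by
  let _ : Module ℝ[X] HZ := Module.compHom HZ (evJ J)
  have hsm : ∀ (q : ℝ[X]) (u : HZ), q • u = evJ J q u := fun q u => rfl
  rw [← hsm]
  refine disc_smul a b hpos p ha hb eZ ?_ n
  intro n
  simp only [hsm, evJ_X, evJ_C]
  exact J_eZ a b J hJ n

lemma spec_sub (hpos : ∀ n, 0 < a n) (p : ℕ)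
    (ha : Function.Periodic a (p : ℤ)) (hb : Function.Periodic b (p : ℤ))
    (hJ : ∀ (u : HZ) (n : ℤ),
      (J u) n = (a (n - 1) : ℂ) * u (n - 1) + (b n : ℂ) * u n + (a n : ℂ) * u (n + 1)) (z : ℂ)
    (hz : z ∈ spectrum ℂ J) : ∃ t : ℝ, |t| ≤ 2 ∧ aeval z (disc a b p) = t := by
  have hsa := evJ_selfAdjoint J (J_selfAdjoint a b J hJ) (disc a b p)
  set D := evJ J (disc a b p) with hD
  have hco : ∀ (u : HZ) (n : ℤ), D u n = u (n + p) + u (n - p) := by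
    intro u n
    rw [ContinuousLinearMap.isSelfAdjoint_iff'] at hsa
    rw [← inner_eZ, ← hsa, ContinuousLinearMap.adjoint_inner_right, hD,
      disc_J a b J hpos p ha hb hJ, inner_add_left, inner_eZ, inner_eZ]
  have hnorm : ‖D‖ ≤ 2 := by
    refine ContinuousLinearMap.opNorm_le_bound _ (by norm_num) fun u => ?_
    obtain ⟨v, hv, hv'⟩ := exists_shift p u
    obtain ⟨w, hw, hw'⟩ := exists_shift (-p) u
    have : D u = v + w := by
      ext n
      rw [hco, lp.coeFn_add, Pi.add_apply, hv, hw]; rfl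
    rw [this]
    refine (norm_add_le _ _).trans ?_
    rw [hv', hw']; linarith
  have hmem : eval z ((disc a b p).map (algebraMap ℝ ℂ)) ∈ spectrum ℂ D :=
    spectrum.subset_polynomial_aeval J _ ⟨z, hz, rfl⟩
  rw [eval_map_algebraMap] at hmem
  have hre := hsa.mem_spectrum_eq_re hmem
  have _ : Nontrivial HZ := ⟨⟨eZ 0, 0, fun h => by
    have := congrArg (fun u : HZ => u 0) h
    simp [eZ_apply] at this⟩⟩
  have hn := spectrum.norm_le_norm_of_mem hmem
  refine ⟨(aeval z (disc a b p)).re, ?_, hre⟩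
  exact (Complex.abs_re_le_norm _).trans (hn.trans hnorm)

/-- Existence of a two-sided solution. -/
lemma exists_orbit {S : Type*} (A : ℤ → S ≃ S) (s0 : S) :
    ∃ s : ℤ → S, s 0 = s0 ∧ ∀ n, s (n + 1) = A n (s n) := by
  let f : ℕ → S := fun n => Nat.rec s0 (fun k x => A k x) n
  let g : ℕ → S := fun n => Nat.rec s0 (fun k x => (A (-(k : ℤ) - 1)).symm x) n
  refine ⟨fun n => if 0 ≤ n then f n.toNat else g (-n).toNat, by simp [f], fun n => ?_⟩
  rcases lt_or_ge n 0 with h | h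
  · obtain ⟨k, rfl⟩ : ∃ k : ℕ, n = -(k : ℤ) - 1 := ⟨(-n - 1).toNat, by omega⟩
    have e1 : (-(-(k : ℤ) - 1)).toNat = k + 1 := by omega
    have hg : g (k + 1) = (A (-(k : ℤ) - 1)).symm (g k) := rfl
    simp only
    rw [if_neg (by omega : ¬ (0 : ℤ) ≤ -(k : ℤ) - 1), e1, hg, Equiv.apply_symm_apply]
    rcases Nat.eq_zero_or_pos k with rfl | hk
    · simp [f, g]
    · rw [if_neg (by omega)]
      congr 1; omega
  · obtain ⟨k, rfl⟩ := Int.eq_ofNat_of_zero_le h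
    simp only
    rw [if_pos (by omega), if_pos (by omega)]
    rfl

lemma exists_solution (hpos : ∀ n, 0 < a n) (z : ℂ) : ∃ u : ℤ → ℂ, u 0 ≠ 0 ∧
    ∀ n, z * u n = a (n - 1) * u (n - 1) + b n * u n + a n * u (n + 1) := by
  have hne : ∀ n, (a n : ℂ) ≠ 0 := fun n => by exact_mod_cast (hpos n).ne'
  let A : ℤ → (ℂ × ℂ) ≃ (ℂ × ℂ) := fun n =>
    { toFun := fun x => (x.2, ((z - b (n + 1)) * x.2 - a n * x.1) / a (n + 1))
      invFun := fun y => (((z - b (n + 1)) * y.1 - a (n + 1) * y.2) / a n, y.1)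
      left_inv := fun x => by
        have := hne n
        have := hne (n + 1)
        ext <;> simp; field_simp; ring
      right_inv := fun x => by
        have := hne n
        have := hne (n + 1)
        ext <;> simp; field_simp; ring }
  obtain ⟨s, h0, hs⟩ := exists_orbit A (1, 0)
  refine ⟨fun n => (s n).1, by simp [h0], fun n => ?_⟩
  have h1 : (s n).1 = (s (n - 1)).2 := by
    have := hs (n - 1); rw [sub_add_cancel] at this; rw [this]; rfl
  have h2 : (s (n + 1)).1 = (s n).2 := by rw [hs n]; rfl
  have h3 : (s n).2 = ((z - b n) * (s (n - 1)).2 - a (n - 1) * (s (n - 1)).1) / a n := by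
    have := hs (n - 1); rw [sub_add_cancel] at this; rw [this]; simp [A]
  have := hne n
  simp only
  rw [h2, h3, ← h1]
  field_simp
  ring

lemma exists_unimod (t : ℝ) (ht : |t| ≤ 2) : ∃ l : ℂ, ‖l‖ = 1 ∧ l ^ 2 - t * l + 1 = 0 := by
  have h1 : t ^ 2 ≤ 2 ^ 2 := sq_le_sq.2 (by rwa [abs_two])
  have h2 : Real.sqrt (1 - (t / 2) ^ 2) ^ 2 = 1 - (t / 2) ^ 2 := Real.sq_sqrt (by nlinarith)
  set s := Real.sqrt (1 - (t / 2) ^ 2)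
  refine ⟨⟨t / 2, s⟩, ?_, ?_⟩
  · rw [← sq_eq_sq₀ (norm_nonneg _) zero_le_one, ← Complex.normSq_eq_norm_sq, Complex.normSq_mk]
    nlinarith
  · apply Complex.ext
    · simp [sq]; nlinarith
    · simp [sq]; ring

lemma exists_floquet (hpos : ∀ n, 0 < a n) (p : ℕ)
    (ha : Function.Periodic a (p : ℤ)) (hb : Function.Periodic b (p : ℤ)) (z : ℂ)
    (hz : ∃ t : ℝ, |t| ≤ 2 ∧ aeval z (disc a b p) = t) :
    ∃ u : ℤ → ℂ, (∃ n, u n ≠ 0) ∧ (∀ n, ‖u (n + p)‖ = ‖u n‖) ∧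
    ∀ n, z * u n = a (n - 1) * u (n - 1) + b n * u n + a n * u (n + 1) := by
  obtain ⟨t, ht, hzt⟩ := hz
  obtain ⟨l, hl, hlt⟩ := exists_unimod t ht
  obtain ⟨u, hu0, hu⟩ := exists_solution a b hpos z
  have hper : ∀ n, (t : ℂ) * u n = u (n + p) + u (n - p) := by
    let _ : Module ℝ[X] ℂ := Module.compHom ℂ (aeval z : ℝ[X] →ₐ[ℝ] ℂ).toRingHom
    have hsm : ∀ (q : ℝ[X]) (v : ℂ), q • v = aeval z q * v := fun q v => rfl
    intro n
    rw [← hzt, ← hsm]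
    refine disc_smul a b hpos p ha hb u ?_ n
    intro n
    simp only [hsm, aeval_X, aeval_C]
    exact hu n
  have hl0 : l ≠ 0 := by rintro rfl; simp at hl
  by_cases h : ∃ n, u (n + p) - l⁻¹ * u n ≠ 0
  · refine ⟨fun n => u (n + p) - l⁻¹ * u n, h, fun n => ?_, fun n => ?_⟩
    · have h1 := hper (n + p)
      rw [add_sub_cancel_right] at h1
      have : u (n + p + p) - l⁻¹ * u (n + p) = l * (u (n + p) - l⁻¹ * u n) := by
        field_simp
        linear_combination (-l) * h1 - u (n + p) * hlt
      simp only
      rw [this, norm_mul, hl, one_mul]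
    · have e1 := hu n
      have e2 := hu (n + p)
      rw [ha, hb, show n + (p : ℤ) - 1 = n - 1 + p by ring, ha,
        show n + (p : ℤ) + 1 = n + 1 + p by ring] at e2
      simp only
      linear_combination e2 - l⁻¹ * e1
  · push Not at h
    refine ⟨u, ⟨0, hu0⟩, fun n => ?_, hu⟩
    rw [sub_eq_zero.1 (h n), norm_mul, norm_inv, hl, inv_one, one_mul]

lemma periodic_bdd (p : ℕ) (hp : 1 ≤ p) (f : ℤ → ℝ) (hf : Function.Periodic f (p : ℤ)) :
    ∃ B, 0 ≤ B ∧ ∀ n, |f n| ≤ B := by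
  refine ⟨∑ i ∈ Finset.range p, |f i|, Finset.sum_nonneg fun _ _ => abs_nonneg _, fun n => ?_⟩
  have h1 : f n = f (n % p) := by
    have := hf.int_mul (n / p) (n % p)
    rw [← this]
    congr 1
    have := Int.emod_add_mul_ediv n p
    push_cast
    linarith
  have h2 := Int.emod_nonneg n (by omega : (p : ℤ) ≠ 0)
  have h3 := Int.emod_lt_of_pos n (by omega : (0 : ℤ) < p)
  obtain ⟨k, hk⟩ := Int.eq_ofNat_of_zero_le h2
  rw [h1, hk]
  exact Finset.single_le_sum (f := fun i : ℕ => |f i|) (fun _ _ => abs_nonneg _)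
    (Finset.mem_range.2 (by omega))

lemma spec_sup (hpos : ∀ n, 0 < a n) (p : ℕ) (hp : 1 ≤ p)
    (ha : Function.Periodic a (p : ℤ)) (hb : Function.Periodic b (p : ℤ))
    (hJ : ∀ (u : HZ) (n : ℤ),
      (J u) n = (a (n - 1) : ℂ) * u (n - 1) + (b n : ℂ) * u n + (a n : ℂ) * u (n + 1)) (z : ℂ)
    (hz : ∃ t : ℝ, |t| ≤ 2 ∧ aeval z (disc a b p) = t) : z ∈ spectrum ℂ J := by
  obtain ⟨w, ⟨n0, hn0⟩, hwp, hw⟩ := exists_floquet a b hpos p ha hb z hz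
  have hwper : Function.Periodic (fun n => ‖w n‖) (p : ℤ) := hwp
  obtain ⟨A, hA0, hA⟩ := periodic_bdd p hp a ha
  obtain ⟨B, hB0, hB⟩ := periodic_bdd p hp _ hwper
  simp only [abs_norm] at hB
  by_contra hns
  rw [spectrum.notMem_iff] at hns
  obtain ⟨R, hR⟩ := hns.exists_left_inv
  let f : ℕ → HZ := fun N => ∑ n ∈ Finset.range N, w n • eZ n
  have hf : ∀ N : ℕ, J (f N) - z • f N =
      ((a (N - 1) * w (N - 1) : ℂ) • eZ N - (a (N - 1) * w N : ℂ) • eZ (N - 1)) -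
      ((a (-1) * w (-1) : ℂ) • eZ 0 - (a (-1) * w 0 : ℂ) • eZ (-1)) := by
    intro N
    induction N with
    | zero => simp [f]
    | succ N ih =>
      have hs : f (N + 1) = f N + w N • eZ N := Finset.sum_range_succ _ _
      have e := hw N
      rw [hs, map_add, map_smul, J_eZ a b J hJ]
      push_cast
      rw [add_sub_cancel_right]
      have e' : (b N : ℂ) * w N = z * w N - a (N - 1) * w (N - 1) - a N * w (N + 1) := by
        linear_combination -e
      calc _ = (J (f N) - z • f N) + ((a (N - 1) * w N : ℂ) • eZ (N - 1) + ((b N : ℂ) * w N) • eZ N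
              + (a N * w N : ℂ) • eZ (N + 1)) - (z * w N) • eZ N := by module
        _ = _ := by rw [ih, e']; module
  have hterm : ∀ (i j k : ℤ), ‖(a i * w j : ℂ) • eZ k‖ ≤ A * B := by
    intro i j k
    rw [norm_smul, lp.norm_single (by norm_num), norm_one, mul_one, norm_mul, Complex.norm_real]
    exact mul_le_mul (hA i) (hB j) (norm_nonneg _) hA0
  have hbd : ∀ N, ‖J (f N) - z • f N‖ ≤ 4 * (A * B) := by
    intro N
    rw [hf]
    refine (norm_sub_le _ _).trans ?_
    have h1 := (norm_sub_le ((a (N - 1) * w (N - 1) : ℂ) • eZ N) ((a (N - 1) * w N : ℂ) • eZ (N - 1)))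
    have h2 := (norm_sub_le ((a (-1) * w (-1) : ℂ) • eZ 0) ((a (-1) * w 0 : ℂ) • eZ (-1)))
    linarith [hterm (N - 1) (N - 1) N, hterm (N - 1) N (N - 1), hterm (-1) (-1) 0,
      hterm (-1) 0 (-1)]
  have hfn : ∀ N, ‖f N‖ ≤ ‖R‖ * (4 * (A * B)) := by
    intro N
    have h1 : f N = R (z • f N - J (f N)) := by
      have := congrArg (fun T : HZ →L[ℂ] HZ => T (f N)) hR
      simp only [ContinuousLinearMap.mul_apply, ContinuousLinearMap.sub_apply,
        ContinuousLinearMap.one_apply, Algebra.algebraMap_eq_smul_one,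
        ContinuousLinearMap.smul_apply] at this
      exact this.symm
    rw [h1]
    refine (R.le_opNorm _).trans ?_
    rw [norm_sub_rev]
    exact mul_le_mul_of_nonneg_left (hbd N) (norm_nonneg _)
  have hsq : ∀ N : ℕ, ∑ n ∈ Finset.range N, ‖w n‖ ^ 2 ≤ (‖R‖ * (4 * (A * B))) ^ 2 := by
    intro N
    have h1 : ‖f N‖ ^ 2 = ∑ n ∈ Finset.range N, ‖w n‖ ^ 2 := by
      have h2 := lp.norm_sum_single (E := fun _ : ℤ => ℂ) (p := 2) (by norm_num) w
        ((Finset.range N).map Nat.castEmbedding)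
      simp only [Finset.sum_map, Nat.castEmbedding_apply, ENNReal.toReal_ofNat, Real.rpow_two] at h2
      rw [← h2]
      congr 2
      refine Finset.sum_congr rfl fun n _ => ?_
      rw [← lp.single_smul, smul_eq_mul, mul_one]
    rw [← h1]
    exact pow_le_pow_left₀ (norm_nonneg _) (hfn N) 2
  have hsum : Summable fun n : ℕ => ‖w n‖ ^ 2 :=
    summable_of_sum_range_le (fun n => by positivity) hsq
  have hlim := hsum.tendsto_atTop_zero
  have hk : Filter.Tendsto (fun k : ℕ => (n0 % p).toNat + k * p) Filter.atTop Filter.atTop := by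
    refine Filter.tendsto_atTop_mono (fun k => ?_) Filter.tendsto_id
    simp only [id]; nlinarith
  have hlim2 := hlim.comp hk
  have hconst : ((fun n : ℕ => ‖w n‖ ^ 2) ∘ fun k : ℕ => (n0 % p).toNat + k * p) =
      fun _ => ‖w n0‖ ^ 2 := by
    funext k
    simp only [Function.comp]
    have h2 := Int.emod_nonneg n0 (by omega : (p : ℤ) ≠ 0)
    have h3 := hwper.int_mul k (n0 % p)
    have h4 := hwper.int_mul (n0 / p) (n0 % p)
    have h5 : n0 % p + (n0 / p : ℤ) * p = n0 := by
      have := Int.emod_add_mul_ediv n0 p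
      linarith
    simp only [Int.cast_id] at h3 h4
    rw [h5] at h4
    push_cast
    rw [Int.toNat_of_nonneg h2, h3, h4]
  rw [hconst] at hlim2
  have := tendsto_nhds_unique hlim2 tendsto_const_nhds
  have h0 : 0 < ‖w n0‖ := norm_pos_iff.2 hn0
  nlinarith

lemma spec_iff (hpos : ∀ n, 0 < a n) (p : ℕ) (hp : 1 ≤ p)
    (ha : Function.Periodic a (p : ℤ)) (hb : Function.Periodic b (p : ℤ))
    (hJ : ∀ (u : HZ) (n : ℤ),
      (J u) n = (a (n - 1) : ℂ) * u (n - 1) + (b n : ℂ) * u n + (a n : ℂ) * u (n + 1)) (z : ℂ) :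
    z ∈ spectrum ℂ J ↔ ∃ t : ℝ, |t| ≤ 2 ∧ aeval z (disc a b p) = t :=
  ⟨spec_sub a b J hpos p ha hb hJ z, spec_sup a b J hpos p hp ha hb hJ z⟩

end operator

/-- two two-sided `p`-periodic Jacobi operators have the same
spectrum iff they have the same discriminant. -/
theorem statement5 (p : ℕ) (hp : 1 ≤ p)
    (a b : ℤ → ℝ) (hpos : ∀ n, 0 < a n)
    (hpera : Function.Periodic a (p : ℤ)) (hperb : Function.Periodic b (p : ℤ))
    (a' b' : ℤ → ℝ) (hpos' : ∀ n, 0 < a' n)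
    (hpera' : Function.Periodic a' (p : ℤ)) (hperb' : Function.Periodic b' (p : ℤ))
    (J : HZ →L[ℂ] HZ)
    (hJ : ∀ (u : HZ) (n : ℤ),
      (J u) n = (a (n - 1) : ℂ) * u (n - 1) + (b n : ℂ) * u n + (a n : ℂ) * u (n + 1))
    (J' : HZ →L[ℂ] HZ)
    (hJ' : ∀ (u : HZ) (n : ℤ),
      (J' u) n = (a' (n - 1) : ℂ) * u (n - 1) + (b' n : ℂ) * u n + (a' n : ℂ) * u (n + 1)) :
    spectrum ℂ J = spectrum ℂ J' ↔ disc a b p = disc a' b' p := by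
  have h1 := spec_iff a b J hpos p hp hpera hperb hJ
  have h2 := spec_iff a' b' J' hpos' p hp hpera' hperb' hJ'
  constructor
  · intro h
    obtain ⟨d1, l1⟩ := disc_deg a b hpos p hp
    obtain ⟨d2, l2⟩ := disc_deg a' b' hpos' p hp
    refine poly_unique p hp _ _ d1 d2 l1 l2 (fun z => ?_) (fun z hz => ?_)
    · rw [← h1, ← h2, h]
    · exact ⟨z.re, (J_selfAdjoint a b J hJ).mem_spectrum_eq_re ((h1 z).2 hz)⟩
  · intro h
    ext z
    rw [h1, h2, h]
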